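/- arXiv:1905.06408 — 2 statements merged into one kernel-verified Lean document; each statement's English description precedes it below -/
import Mathlib

section
/- First derivatives of prepared families with C^1-bounded monomial map are uniformly weakly mild: Let T ⊂ ℝ^k and let U ⊂ T × (0,1)^m be such that for every t ∈ T the fiber U_t = {x : (t,x) ∈ U} is open in (0,1)^m. Suppose f : U → ℝ can be written as f(t,x) = b_j(t,x)·F(b(t,x)), where b = (b_1,…,b_N) : U → ℝ^N is bounded, b_j is one of its component functions, each component has the form b_i(t,x) = a_i(t)·x^{μ_i} for some function a_i : ℝ^k → ℝ and μ_i ∈ ℝ^m, and F is real analytic on an open neighborhood of the topological closure of b(U). Assume in addition that there is a constant B' such that for every t ∈ T and every i, the C^1-norm of the function x ↦ b_i(t,x) on U_t is at most B'. Then there exist A,B > 0 such that for every t ∈ T and every multi-index β ∈ ℕ^m with |β| ≤ 1, the function (f_t)^{(β)} : U_t → ℝ is weakly (A,B,0)-mild. -/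
/-!
The proof is a rescaling argument. Fix `t` and a base point `x₀ ∈ U_t`, and write `z = x / x₀`
coordinatewise. A monomial satisfies `x ^ μ = x₀ ^ μ * z ^ μ`, so with `Φ c = c_j F(c)` one has
`f_t x = Φ (b_i(t, x₀) z ^ μ_i)_i = G₀ (b(t, x₀), z)`, where `G₀` does not depend on `t` or `x₀`
and is analytic at `(c, 1)` for every `c` in the compact set `closure (b '' U)`. Cauchy estimates
for `G₀` are uniform on this compact set (`compact_cauchy`), and undoing the rescaling produces
exactly the factor `1 / x₀ ^ ν` (`weaklyMild_of_scaling`).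

For a first derivative, the chain rule gives `∂_l f_t = ∑ i, ∂_l b_i * ∂_i Φ (b)`. The functions
`∂_l b_i = μ_{i,l} b_i / x_l` are again constant multiples of monomials, and they are bounded by
the `C^1` hypothesis. Hence `∂_l f_t x = G_l ((b(t, x₀), ∂_l b(t, x₀)), z)` with `G_l` analytic
along `(closure (b '' U) × closedBall 0 B') × {1}`, and the same argument applies.
-/

open Set

noncomputable section

/-- The list of coordinate directions (with multiplicities) associated to a
multi-index `ν ∈ ℕ^d`. -/
def mDirs {d : ℕ} (ν : Fin d → ℕ) : List (Fin d → ℝ) :=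
  (List.finRange d).flatMap fun i => List.replicate (ν i) (Pi.single i 1)

/-- The partial derivative `f^{(ν)}` of `f : ℝ^d → ℝ` (computed within the set `U`) at `x`,
realized as the iterated derivative of order `|ν|` in the coordinate directions given by `ν`. -/
def pderivW {d : ℕ} (U : Set (Fin d → ℝ)) (f : (Fin d → ℝ) → ℝ) (ν : Fin d → ℕ)
    (x : Fin d → ℝ) : ℝ :=
  iteratedFDerivWithin ℝ (∑ i, ν i) f U x (fun j => (mDirs ν).getD (j : ℕ) 0)

/-- `f` is `(A,B,C)`-mild up to order `r` on `U`. -/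
def MildUpTo {d : ℕ} (r : ℕ∞) (U : Set (Fin d → ℝ)) (f : (Fin d → ℝ) → ℝ)
    (A B C : ℝ) : Prop :=
  ContDiffOn ℝ r f U ∧ ∀ ν : Fin d → ℕ, (∑ i, ν i : ℕ∞) ≤ r → ∀ x ∈ U,
    |pderivW U f ν x| ≤ B ^ (C + 1) * A ^ (∑ i, ν i) * (Nat.factorial (∑ i, ν i) : ℝ) ^ (C + 1)

/-- `f` is `(A,B,C)`-mild on `U`. -/
def Mild {d : ℕ} (U : Set (Fin d → ℝ)) (f : (Fin d → ℝ) → ℝ) (A B C : ℝ) : Prop :=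
  MildUpTo ⊤ U f A B C

/-- `f` is weakly `(A,B,C)`-mild up to order `r` on `U ⊆ (0,1)^d`. -/
def WeaklyMildUpTo {d : ℕ} (r : ℕ∞) (U : Set (Fin d → ℝ)) (f : (Fin d → ℝ) → ℝ)
    (A B C : ℝ) : Prop :=
  ContDiffOn ℝ r f U ∧ ∀ ν : Fin d → ℕ, (∑ i, ν i : ℕ∞) ≤ r → ∀ x ∈ U,
    |pderivW U f ν x| ≤
      B ^ (C + 1) * A ^ (∑ i, ν i) * (Nat.factorial (∑ i, ν i) : ℝ) ^ (C + 1) /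
        ∏ i, (x i) ^ (ν i)

/-- `f` is weakly `(A,B,C)`-mild on `U`. -/
def WeaklyMild {d : ℕ} (U : Set (Fin d → ℝ)) (f : (Fin d → ℝ) → ℝ) (A B C : ℝ) : Prop :=
  WeaklyMildUpTo ⊤ U f A B C

/-- `f` is a Gevrey function of class `α` on `U`. -/
def Gevrey {d : ℕ} (U : Set (Fin d → ℝ)) (f : (Fin d → ℝ) → ℝ) (α : ℝ) : Prop :=
  ContDiffOn ℝ (⊤ : ℕ∞) f U ∧ ∃ M R : ℝ, 0 < M ∧ 0 < R ∧ ∀ ν : Fin d → ℕ, ∀ x ∈ U,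
    |pderivW U f ν x| ≤ (M * (Nat.factorial (∑ i, ν i) : ℝ) / R ^ (∑ i, ν i)) ^ α

open scoped Topology NNReal ENNReal

/-! ### Uniform Cauchy estimates for real analytic functions -/

/-- Cauchy estimates near a point of analyticity, with constants uniform in a neighbourhood. They
follow from the uniform bound on the coefficients of the re-centred power series. -/
lemma local_cauchy {E : Type*} [NormedAddCommGroup E] [NormedSpace ℝ E] {G : E → ℝ} {x : E}
    (hG : AnalyticAt ℝ G x) :
    ∃ A B : ℝ, 0 < A ∧ 0 < B ∧ ∀ᶠ y in 𝓝 x, ∀ n : ℕ,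
      ‖iteratedFDeriv ℝ n G y‖ ≤ B * A ^ n * (n.factorial : ℝ) := by
  obtain ⟨p, r, hp⟩ := hG
  obtain ⟨ρ, hρ0, hρ⟩ : ∃ ρ : ℝ≥0, 0 < ρ ∧ (ρ + ρ : ℝ≥0∞) < r := by
    obtain ⟨q, hq0, hq⟩ := ENNReal.lt_iff_exists_nnreal_btwn.1 hp.r_pos
    refine ⟨q / 2, half_pos (by exact_mod_cast hq0), ?_⟩
    rw [← ENNReal.coe_add, add_halves]; exact hq
  have hsum := p.changeOriginSeries_summable_aux₁ (hρ.trans_le hp.r_le)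
  set C : ℝ≥0 := ∑' s : Σ k l : ℕ, { s : Finset (Fin (k + l)) // s.card = l },
    ‖p (s.1 + s.2.1)‖₊ * ρ ^ s.2.1 * ρ ^ s.1 with hC
  refine ⟨(ρ : ℝ)⁻¹, C + 1, by positivity, by positivity, ?_⟩
  filter_upwards [Metric.ball_mem_nhds x (show (0 : ℝ) < ρ from hρ0)] with y hy n
  -- the power series of `G` at `y = x + h` is `p.changeOrigin h`
  obtain ⟨h, rfl⟩ : ∃ h, y = x + h := ⟨y - x, by abel⟩
  have hh : ‖h‖₊ < ρ := by
    rw [Metric.mem_ball, dist_eq_norm, add_sub_cancel_left] at hy; exact_mod_cast hy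
  have hhρ : (‖h‖₊ : ℝ≥0∞) < ρ := by exact_mod_cast hh
  have hhr : (‖h‖₊ : ℝ≥0∞) < r := (hhρ.trans_le le_self_add).trans hρ
  have hps := hp.changeOrigin hhr
  have hq : ‖p.changeOrigin h n‖₊ * ρ ^ n ≤ C := by
    have hfib := (NNReal.summable_sigma.1 hsum).1 n
    calc ‖p.changeOrigin h n‖₊ * ρ ^ n
        ≤ (∑' s : Σ l : ℕ, { s : Finset (Fin (n + l)) // s.card = l },
            ‖p (n + s.1)‖₊ * ‖h‖₊ ^ s.1) * ρ ^ n := by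
          gcongr; exact p.nnnorm_changeOrigin_le n (hhr.trans_le hp.r_le)
      _ = ∑' s : Σ l : ℕ, { s : Finset (Fin (n + l)) // s.card = l },
            ‖p (n + s.1)‖₊ * ‖h‖₊ ^ s.1 * ρ ^ n := by rw [NNReal.tsum_mul_right]
      _ ≤ ∑' s : Σ l : ℕ, { s : Finset (Fin (n + l)) // s.card = l },
            ‖p (n + s.1)‖₊ * ρ ^ s.1 * ρ ^ n := by
          have hle : ∀ s : Σ l : ℕ, { s : Finset (Fin (n + l)) // s.card = l },
            ‖p (n + s.1)‖₊ * ‖h‖₊ ^ s.1 * ρ ^ n ≤ ‖p (n + s.1)‖₊ * ρ ^ s.1 * ρ ^ n := by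
            intro s; gcongr
          exact (NNReal.summable_of_le hle hfib).tsum_le_tsum hle hfib
      _ ≤ C := by
          rw [hC, hsum.tsum_sigma' (NNReal.summable_sigma.1 hsum).1]
          exact (NNReal.summable_sigma.1 hsum).2.le_tsum n (fun _ _ => zero_le)
  have hq' : ‖p.changeOrigin h n‖ ≤ (C + 1) * ((ρ : ℝ)⁻¹) ^ n := by
    have : ‖p.changeOrigin h n‖ * (ρ : ℝ) ^ n ≤ C := by exact_mod_cast hq
    rw [inv_pow, ← div_eq_mul_inv, le_div_iff₀ (by positivity)]
    linarith
  refine ContinuousMultilinearMap.opNorm_le_bound (by positivity) fun v => ?_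
  rw [hps.iteratedFDeriv_eq_sum_of_completeSpace]
  calc ‖∑ σ : Equiv.Perm (Fin n), p.changeOrigin h n (fun i => v (σ i))‖
      ≤ ∑ σ : Equiv.Perm (Fin n), ‖p.changeOrigin h n‖ * ∏ i, ‖v i‖ := by
        refine norm_sum_le_of_le _ fun σ _ => ?_
        refine ((p.changeOrigin h n).le_opNorm _).trans_eq ?_
        rw [Equiv.prod_comp σ (fun i => ‖v i‖)]
    _ = n.factorial * (‖p.changeOrigin h n‖ * ∏ i, ‖v i‖) := by
        simp [Fintype.card_perm]
    _ ≤ n.factorial * (((C + 1) * ((ρ : ℝ)⁻¹) ^ n) * ∏ i, ‖v i‖) := by gcongr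
    _ = _ := by ring

/-- Cauchy estimates with uniform constants along a compact set of points of analyticity. -/
lemma compact_cauchy {E : Type*} [NormedAddCommGroup E] [NormedSpace ℝ E] {G : E → ℝ}
    {K : Set E} (hK : IsCompact K) (hG : ∀ x ∈ K, AnalyticAt ℝ G x) :
    ∃ A B : ℝ, 0 < A ∧ 0 < B ∧ ∀ y ∈ K, ∀ n : ℕ,
      ‖iteratedFDeriv ℝ n G y‖ ≤ B * A ^ n * (n.factorial : ℝ) := by
  refine hK.induction_on (p := fun s => ∃ A B : ℝ, 0 < A ∧ 0 < B ∧ ∀ y ∈ s, ∀ n : ℕ,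
      ‖iteratedFDeriv ℝ n G y‖ ≤ B * A ^ n * (n.factorial : ℝ)) ?_ ?_ ?_ ?_
  · exact ⟨1, 1, one_pos, one_pos, by simp⟩
  · rintro s t hst ⟨A, B, hA, hB, h⟩
    exact ⟨A, B, hA, hB, fun y hy => h y (hst hy)⟩
  · rintro s t ⟨A, B, hA, hB, h⟩ ⟨A', B', hA', hB', h'⟩
    refine ⟨A + A', B + B', by positivity, by positivity, ?_⟩
    rintro y (hy | hy) n
    · refine (h y hy n).trans ?_
      gcongr <;> linarith
    · refine (h' y hy n).trans ?_
      gcongr <;> linarith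
  · intro x hx
    obtain ⟨A, B, hA, hB, h⟩ := local_cauchy (hG x hx)
    exact ⟨_, mem_nhdsWithin_of_mem_nhds h, A, B, hA, hB, fun y hy => hy⟩

/-! ### Weak mildness from rescaling -/

/-- A product over the direction list of a multi-index, regrouped by coordinate. -/
lemma prod_mDirs {d : ℕ} (ν : Fin d → ℕ) (h : (Fin d → ℝ) → ℝ) :
    ∏ j : Fin (∑ i, ν i), h ((mDirs ν).getD (j : ℕ) 0) = ∏ i, h (Pi.single i 1) ^ ν i := by
  have hlen : (mDirs ν).length = ∑ i, ν i := by
    simp [mDirs, List.length_flatMap, ← List.ofFn_eq_map, List.sum_ofFn]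
  have h1 : ∏ j : Fin (∑ i, ν i), h ((mDirs ν).getD (j : ℕ) 0) =
      ∏ j : Fin (mDirs ν).length, h ((mDirs ν).getD (j : ℕ) 0) := by rw [hlen]
  have h2 : ((mDirs ν).map h).prod = ∏ i, h (Pi.single i 1) ^ ν i := by
    rw [mDirs, List.map_flatMap, List.flatMap_def, List.prod_flatten]
    simp [← List.ofFn_eq_map, List.prod_ofFn]
  rw [h1, ← h2, ← Fin.prod_univ_fun_getElem]
  refine Finset.prod_congr rfl fun j _ => ?_
  simp

lemma WeaklyMild.mono {d : ℕ} {S : Set (Fin d → ℝ)} {g : (Fin d → ℝ) → ℝ} {A B A' B' : ℝ}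
    (hpos : ∀ x ∈ S, ∀ i, 0 < x i) (h : WeaklyMild S g A B 0) (hA : 0 ≤ A) (hB : 0 ≤ B)
    (hAA : A ≤ A') (hBB : B ≤ B') : WeaklyMild S g A' B' 0 := by
  refine ⟨h.1, fun ν hν x hx => (h.2 ν hν x hx).trans ?_⟩
  have : 0 ≤ ∏ i, x i ^ ν i := Finset.prod_nonneg fun i _ => pow_nonneg (hpos x hx i).le _
  have hB' := hB.trans hBB
  have hA' := hA.trans hAA
  simp only [zero_add, Real.rpow_one]
  gcongr

/-- If around every `x₀ ∈ S` the function `g` is `x ↦ G (c x₀, x / x₀)` with `c x₀` in a set `K`,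
then Cauchy estimates for `G`, uniform on `K × {1}`, give weak mildness of `g`: each derivative in
the direction `i` costs one factor `1 / x₀ i`. -/
lemma weaklyMild_of_scaling {E : Type*} [NormedAddCommGroup E] [NormedSpace ℝ E] {m : ℕ}
    {S : Set (Fin m → ℝ)} (hS : IsOpen S) (hpos : ∀ x ∈ S, ∀ i, 0 < x i)
    {g : (Fin m → ℝ) → ℝ} {G : E × (Fin m → ℝ) → ℝ} {K : Set E} {c : (Fin m → ℝ) → E}
    (hc : ∀ x ∈ S, c x ∈ K) (hG : ∀ e ∈ K, AnalyticAt ℝ G (e, 1)) {A B : ℝ}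
    (hbd : ∀ e ∈ K, ∀ n : ℕ,
      ‖iteratedFDeriv ℝ n G (e, 1)‖ ≤ B * A ^ n * (n.factorial : ℝ))
    (hg : ∀ x₀ ∈ S, ∀ x ∈ S, g x = G (c x₀, fun i => x i / x₀ i)) :
    WeaklyMild S g A B 0 := by
  -- `x ↦ (c x₀, x / x₀)` is the translate by `(c x₀, 0)` of the linear map `Λ`
  have key : ∀ x₀ ∈ S, ∃ Λ : (Fin m → ℝ) →L[ℝ] E × (Fin m → ℝ),
      (∀ x, Λ x = (0, fun i => x i / x₀ i)) := by
    intro x₀ _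
    refine ⟨ContinuousLinearMap.prod 0
      (ContinuousLinearMap.pi fun i => (x₀ i)⁻¹ • ContinuousLinearMap.proj i), fun x => ?_⟩
    ext i <;> simp [div_eq_inv_mul]
  have hone : ∀ x₀ ∈ S, (fun i => x₀ i / x₀ i) = (1 : Fin m → ℝ) := by
    intro x₀ hx₀; funext i; simp [(hpos x₀ hx₀ i).ne']
  have hloc : ∀ x₀ ∈ S, ∀ Λ : (Fin m → ℝ) →L[ℝ] E × (Fin m → ℝ),
      (∀ x, Λ x = (0, fun i => x i / x₀ i)) →
      g =ᶠ[𝓝 x₀] (fun q => G (q + (c x₀, 0))) ∘ Λ := by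
    intro x₀ hx₀ Λ hΛ
    filter_upwards [hS.mem_nhds hx₀] with x hx
    simp [hg x₀ hx₀ x hx, hΛ]
  constructor
  · intro x₀ hx₀
    obtain ⟨Λ, hΛ⟩ := key x₀ hx₀
    refine ContDiffAt.contDiffWithinAt ?_
    refine ContDiffAt.congr_of_eventuallyEq ?_ (hloc x₀ hx₀ Λ hΛ)
    refine ContDiffAt.comp x₀ ?_ Λ.contDiff.contDiffAt
    refine ContDiffAt.comp (g := G) _ ?_ (by fun_prop)
    have := hG _ (hc x₀ hx₀)
    simpa [hΛ, hone x₀ hx₀] using this.contDiffAt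
  · intro ν _ x₀ hx₀
    obtain ⟨Λ, hΛ⟩ := key x₀ hx₀
    have hp0 := hpos x₀ hx₀
    have hprod : 0 < ∏ i, x₀ i ^ ν i := Finset.prod_pos fun i _ => pow_pos (hp0 i) _
    set n := ∑ i, ν i with hn
    set H : E × (Fin m → ℝ) → ℝ := fun q => G (q + (c x₀, 0)) with hH
    have hpt : Λ x₀ + (c x₀, 0) = (c x₀, 1) := by simp [hΛ, hone x₀ hx₀]
    have hHan : AnalyticAt ℝ H (Λ x₀) := by
      refine AnalyticAt.comp (g := G) ?_ (by fun_prop)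
      rw [hpt]; exact hG _ (hc x₀ hx₀)
    have hopen := isOpen_analyticAt ℝ H
    have hopen' := hopen.preimage Λ.continuous
    have hiter : iteratedFDeriv ℝ n g x₀ =
        (iteratedFDeriv ℝ n G (c x₀, 1)).compContinuousLinearMap fun _ => Λ := by
      have hev : g =ᶠ[𝓝 x₀] H ∘ Λ := hloc x₀ hx₀ Λ hΛ
      rw [(hev.iteratedFDeriv ℝ n).eq_of_nhds,
        ← iteratedFDerivWithin_of_isOpen n hopen' (show x₀ ∈ Λ ⁻¹' _ from hHan),
        ContinuousLinearMap.iteratedFDerivWithin_comp_right (n := n)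
          (s := {q | AnalyticAt ℝ H q}) Λ
          (fun q hq => (AnalyticAt.contDiffAt hq).contDiffWithinAt)
          hopen.uniqueDiffOn hopen'.uniqueDiffOn hHan le_rfl,
        iteratedFDerivWithin_of_isOpen n hopen hHan, hH, iteratedFDeriv_comp_add_right, hpt]
    have hΛe : ∀ i, ‖Λ (Pi.single i 1)‖ = (x₀ i)⁻¹ := by
      intro i
      have : (fun k => (Pi.single i (1 : ℝ) : Fin m → ℝ) k / x₀ k) = Pi.single i (x₀ i)⁻¹ := by
        funext k
        by_cases hk : k = i
        · subst hk; simp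
        · simp [hk]
      rw [hΛ, this, Prod.norm_mk]
      simp [Pi.norm_single, (hp0 i).le]
    rw [pderivW, iteratedFDerivWithin_of_isOpen _ hS hx₀, ← hn, hiter, ← Real.norm_eq_abs,
      ContinuousMultilinearMap.compContinuousLinearMap_apply]
    refine (ContinuousMultilinearMap.le_opNorm _ _).trans ?_
    rw [prod_mDirs ν fun v => ‖Λ v‖]
    simp only [hΛe, zero_add, Real.rpow_one, inv_pow, Finset.prod_inv_distrib]
    rw [div_eq_mul_inv]
    gcongr
    exact hbd _ (hc x₀ hx₀) n

/-! ### Real-power monomials -/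

/-- The real-power monomial `z ^ μ`, written as `exp (∑ μ_l log z_l)` so that its derivative and
its analyticity are immediate. It agrees with `∏ l, z l ^ μ l` on the positive orthant. -/
def realMonomial {m : ℕ} (μ z : Fin m → ℝ) : ℝ := Real.exp (∑ l, μ l * Real.log (z l))

lemma prod_rpow_eq_realMonomial {m : ℕ} (μ z : Fin m → ℝ) (hz : ∀ l, 0 < z l) :
    ∏ l, z l ^ μ l = realMonomial μ z := by
  simp only [realMonomial, Real.exp_sum]
  exact Finset.prod_congr rfl fun l _ => by rw [Real.rpow_def_of_pos (hz l), mul_comm]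

/-- Monomials are multiplicative under coordinatewise rescaling. -/
lemma realMonomial_scale {m : ℕ} (μ x₀ x : Fin m → ℝ) (hx₀ : ∀ l, 0 < x₀ l) (hx : ∀ l, 0 < x l) :
    realMonomial μ x = realMonomial μ x₀ * realMonomial μ (fun l => x l / x₀ l) := by
  rw [realMonomial, realMonomial, realMonomial, ← Real.exp_add, ← Finset.sum_add_distrib]
  congr 1
  refine Finset.sum_congr rfl fun l _ => ?_
  rw [Real.log_div (hx l).ne' (hx₀ l).ne']; ring

lemma hasFDerivAt_realMonomial {m : ℕ} (μ x : Fin m → ℝ) (hx : ∀ l, 0 < x l) :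
    HasFDerivAt (realMonomial μ) (realMonomial μ x • ∑ l, μ l • (x l)⁻¹ •
      (ContinuousLinearMap.proj l : (Fin m → ℝ) →L[ℝ] ℝ)) x := by
  refine HasFDerivAt.exp (f := fun z : Fin m → ℝ => ∑ l, μ l * Real.log (z l)) ?_
  refine HasFDerivAt.fun_sum fun l _ => ?_
  exact ((hasFDerivAt_apply l x).log (hx l).ne').const_mul (μ l)

lemma analyticAt_realMonomial {m : ℕ} {E : Type*} [NormedAddCommGroup E] [NormedSpace ℝ E]
    (μ : Fin m → ℝ) (e : E) : AnalyticAt ℝ (fun q : E × (Fin m → ℝ) => realMonomial μ q.2) (e, 1) := by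
  unfold realMonomial
  refine AnalyticAt.rexp' (Finset.analyticAt_fun_sum _ fun l _ => analyticAt_const.mul ?_)
  refine AnalyticAt.comp (g := Real.log) (f := fun q : E × (Fin m → ℝ) => q.2 l)
    (analyticAt_log (by simp)) ?_
  exact ((ContinuousLinearMap.proj (R := ℝ) (φ := fun _ : Fin m => ℝ) l).comp
    (ContinuousLinearMap.snd ℝ E (Fin m → ℝ))).analyticAt _

lemma analyticAt_clm_apply {E V : Type*} [NormedAddCommGroup E] [NormedSpace ℝ E]
    [NormedAddCommGroup V] [NormedSpace ℝ V] {L : E → V →L[ℝ] ℝ} {v : E → V} {x : E}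
    (hL : AnalyticAt ℝ L x) (hv : AnalyticAt ℝ v x) :
    AnalyticAt ℝ (fun q => L q (v q)) x :=
  ((ContinuousLinearMap.id ℝ (V →L[ℝ] ℝ)).analyticAt_bilinear (L x, v x)).comp
    (f := fun q => (L q, v q)) (hL.prod hv)

/-! ### Partial derivatives of order at most one -/

lemma pderivW_zero {m : ℕ} (S : Set (Fin m → ℝ)) (g : (Fin m → ℝ) → ℝ) (x) :
    pderivW S g 0 x = g x := by
  have : ∀ n : ℕ, n = 0 → ∀ v : ℕ → (Fin m → ℝ),
     iteratedFDerivWithin ℝ n g S x (fun j => v j) = g x := by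
    rintro _ rfl v
    simp
  exact this _ (by simp) (fun j => (mDirs _).getD j 0)

lemma pderivW_single {m : ℕ} {S : Set (Fin m → ℝ)} (hS : IsOpen S) (g : (Fin m → ℝ) → ℝ)
    {x} (hx : x ∈ S) (l : Fin m) :
    pderivW S g (Pi.single l 1) x = fderiv ℝ g x (Pi.single l 1) := by
  have h1 : ∀ n : ℕ, n = 1 → ∀ v : ℕ → (Fin m → ℝ),
     iteratedFDerivWithin ℝ n g S x (fun j => v j) = fderiv ℝ g x (v 0) := by
    rintro _ rfl v
    rw [iteratedFDerivWithin_one_apply (hS.uniqueDiffWithinAt hx),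
      fderivWithin_of_isOpen hS hx]
    simp
  have h2 : (mDirs (Pi.single l 1 : Fin m → ℕ)).getD 0 0 = Pi.single l 1 := by
    have hlen : (mDirs (Pi.single l 1 : Fin m → ℕ)).length = 1 := by
      simp [mDirs, List.length_flatMap, ← List.ofFn_eq_map, List.sum_ofFn]
    obtain ⟨v, hv⟩ := List.length_eq_one_iff.1 hlen
    have : v ∈ mDirs (Pi.single l 1 : Fin m → ℕ) := by simp [hv]
    rw [hv]
    simp only [mDirs, List.mem_flatMap, List.mem_replicate] at this
    obtain ⟨i, -, hi, rfl⟩ := this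
    have : i = l := by
      by_contra h; simp [h] at hi
    simp [this]
  rw [pderivW, h1 _ (by simp) (fun j => (mDirs _).getD j 0), h2]

lemma multiindex_le_one {m : ℕ} (β : Fin m → ℕ) (h : ∑ s, β s ≤ 1) :
    β = 0 ∨ ∃ l, β = Pi.single l 1 := by
  by_cases h0 : ∀ l, β l = 0
  · exact Or.inl (funext h0)
  · push Not at h0
    obtain ⟨l, hl⟩ := h0
    refine Or.inr ⟨l, ?_⟩
    have h1 := Finset.add_sum_erase Finset.univ β (Finset.mem_univ l)
    have h2 : ∑ s ∈ Finset.univ.erase l, β s = 0 := by omega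
    funext k
    by_cases hk : k = l
    · subst hk; simp; omega
    · simpa [hk] using Finset.sum_eq_zero_iff.1 h2 k (by simp [hk])

/-- if moreover the monomial map `b` of a prepared family is `C^1`-bounded in
`x` (uniformly in `t`), then all first-order partial derivatives of the family are
uniformly weakly `(A,B,0)`-mild. -/
theorem prepared_deriv_weaklyMild {k m N : ℕ} (T : Set (Fin k → ℝ))
    (U : Set ((Fin k → ℝ) × (Fin m → ℝ)))
    (hUsub : ∀ p ∈ U, p.1 ∈ T ∧ ∀ i, p.2 i ∈ Ioo (0 : ℝ) 1)
    (hUt : ∀ t ∈ T, IsOpen {x : Fin m → ℝ | (t, x) ∈ U})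
    (f : (Fin k → ℝ) × (Fin m → ℝ) → ℝ)
    (b : (Fin k → ℝ) × (Fin m → ℝ) → Fin N → ℝ) (j : Fin N)
    (a : Fin N → (Fin k → ℝ) → ℝ) (μ : Fin N → Fin m → ℝ)
    (hbform : ∀ p ∈ U, ∀ i, b p i = a i p.1 * ∏ l, p.2 l ^ μ i l)
    (hbbd : Bornology.IsBounded (b '' U))
    (F : (Fin N → ℝ) → ℝ) (W : Set (Fin N → ℝ)) (hW : IsOpen W)
    (hWb : closure (b '' U) ⊆ W) (hF : AnalyticOnNhd ℝ F W)
    (hfform : ∀ p ∈ U, f p = b p j * F (b p))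
    (B' : ℝ)
    (hC1 : ∀ t ∈ T, ∀ i : Fin N, ∀ ν : Fin m → ℕ, (∑ s, ν s) ≤ 1 →
      ∀ x ∈ {x : Fin m → ℝ | (t, x) ∈ U},
        |pderivW {x : Fin m → ℝ | (t, x) ∈ U} (fun x => b (t, x) i) ν x| ≤ B') :
    ∃ A B : ℝ, 0 < A ∧ 0 < B ∧ ∀ t ∈ T, ∀ β : Fin m → ℕ, (∑ s, β s) ≤ 1 →
      WeaklyMild {x : Fin m → ℝ | (t, x) ∈ U}
        (pderivW {x : Fin m → ℝ | (t, x) ∈ U} (fun x => f (t, x)) β) A B 0 := by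
  set Φ : (Fin N → ℝ) → ℝ := fun c => c j * F c with hΦdef
  have hΦ : AnalyticOnNhd ℝ Φ W := fun c hc =>
    ((ContinuousLinearMap.proj (R := ℝ) (φ := fun _ : Fin N => ℝ) j).analyticAt c).mul (hF c hc)
  have hKcpt : IsCompact (closure (b '' U)) := hbbd.isCompact_closure
  set K := closure (b '' U) with hK
  have hbK : ∀ p ∈ U, b p ∈ K := fun p hp => subset_closure ⟨p, hp, rfl⟩
  have hpos : ∀ t, ∀ x ∈ {x : Fin m → ℝ | (t, x) ∈ U}, ∀ i, 0 < x i :=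
    fun t x hx i => ((hUsub _ hx).2 i).1
  have hbmono : ∀ t x, (t, x) ∈ U → ∀ i, b (t, x) i = a i t * realMonomial (μ i) x := by
    intro t x hx i
    rw [hbform _ hx, prod_rpow_eq_realMonomial _ _ (hpos t x hx)]
  have hbscale : ∀ t x₀ x, (t, x₀) ∈ U → (t, x) ∈ U → b (t, x) =
      fun i => b (t, x₀) i * realMonomial (μ i) (fun l => x l / x₀ l) := by
    intro t x₀ x hx₀ hx
    funext i
    rw [hbmono t x hx, hbmono t x₀ hx₀,
      realMonomial_scale (μ i) x₀ x (hpos t x₀ hx₀) (hpos t x hx), mul_assoc]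
  have hbderiv : ∀ t ∈ T, ∀ x, (t, x) ∈ U → ∀ i, HasFDerivAt (fun x => b (t, x) i)
      (a i t • realMonomial (μ i) x • ∑ l, μ i l • (x l)⁻¹ •
        (ContinuousLinearMap.proj l : (Fin m → ℝ) →L[ℝ] ℝ)) x := by
    intro t ht x hx i
    refine ((hasFDerivAt_realMonomial (μ i) x (hpos t x hx)).const_mul (a i t)).congr_of_eventuallyEq ?_
    filter_upwards [(hUt t ht).mem_nhds hx] with y hy
    exact hbmono t y hy i
  -- `D l t x i` is the partial derivative `∂_l b_i (t, x)`
  set D : Fin m → (Fin k → ℝ) → (Fin m → ℝ) → Fin N → ℝ :=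
    fun l t x i => μ i l * b (t, x) i / x l with hD
  have hbD : ∀ t ∈ T, ∀ x, (t, x) ∈ U → ∀ l i,
      fderiv ℝ (fun x => b (t, x) i) x (Pi.single l 1) = D l t x i := by
    intro t ht x hx l i
    rw [(hbderiv t ht x hx i).fderiv, hD]
    have : ∑ k, μ i k * ((x k)⁻¹ * (Pi.single l (1 : ℝ) : Fin m → ℝ) k) = μ i l * (x l)⁻¹ := by
      rw [Finset.sum_eq_single l] <;> simp +contextual
    simp only [smul_apply, sum_apply, ContinuousLinearMap.proj_apply, smul_eq_mul, this,
      hbmono t x hx]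
    ring
  have hDbd : ∀ t ∈ T, ∀ x, (t, x) ∈ U → ∀ l,
      D l t x ∈ Metric.closedBall (0 : Fin N → ℝ) B' := by
    intro t ht x hx l
    have h := fun i => hC1 t ht i (Pi.single l 1) (by simp) x hx
    simp only [pderivW_single (hUt t ht) _ (show x ∈ {x | (t, x) ∈ U} from hx),
      hbD t ht x hx] at h
    rw [mem_closedBall_zero_iff, pi_norm_le_iff_of_nonneg ((abs_nonneg _).trans (h j))]
    exact h
  -- chain rule: `∂_l f_t` is a combination of the bounded functions `∂_l b_i`, with coefficients
  -- analytic in `b`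
  have hfderiv : ∀ t ∈ T, ∀ x, (t, x) ∈ U → ∀ l,
      fderiv ℝ (fun x => f (t, x)) x (Pi.single l 1) = fderiv ℝ Φ (b (t, x)) (D l t x) := by
    intro t ht x hx l
    have h1 : HasFDerivAt (fun x => b (t, x)) _ x := hasFDerivAt_pi.2 (hbderiv t ht x hx)
    have h2 := (hΦ _ (hWb (hbK _ hx))).differentiableAt.hasFDerivAt
    have h3 : (fun x => f (t, x)) =ᶠ[𝓝 x] Φ ∘ fun x => b (t, x) := by
      filter_upwards [(hUt t ht).mem_nhds hx] with y hy
      exact hfform _ hy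
    rw [h3.fderiv_eq, (h2.comp x h1).fderiv, ContinuousLinearMap.comp_apply]
    congr 1
    funext i
    rw [← hbD t ht x hx, (hbderiv t ht x hx i).fderiv]
    rfl
  have h0 : ∃ A B : ℝ, 0 < A ∧ 0 < B ∧ ∀ t ∈ T,
      WeaklyMild {x : Fin m → ℝ | (t, x) ∈ U}
        (pderivW {x : Fin m → ℝ | (t, x) ∈ U} (fun x => f (t, x)) 0) A B 0 := by
    set G : (Fin N → ℝ) × (Fin m → ℝ) → ℝ := fun q => Φ (fun i => q.1 i * realMonomial (μ i) q.2)
    have hG : ∀ e ∈ K, AnalyticAt ℝ G (e, 1) := by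
      intro e he
      refine AnalyticAt.comp (g := Φ) (f := fun q : (Fin N → ℝ) × (Fin m → ℝ) =>
        fun i => q.1 i * realMonomial (μ i) q.2) ?_ ?_
      · have : (fun i => e i * realMonomial (μ i) 1) = e := by simp [realMonomial]
        simpa only [this] using hΦ e (hWb he)
      · refine AnalyticAt.pi fun i => AnalyticAt.mul ?_ (analyticAt_realMonomial _ _)
        exact ((ContinuousLinearMap.proj (R := ℝ) (φ := fun _ : Fin N => ℝ) i).comp
          (ContinuousLinearMap.fst ℝ _ (Fin m → ℝ))).analyticAt _
    obtain ⟨A, B, hA, hB, h⟩ := compact_cauchy (G := G)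
      (hKcpt.prod (isCompact_singleton (x := (1 : Fin m → ℝ)))) (by
        rintro ⟨e, z⟩ ⟨he, rfl⟩; exact hG e he)
    refine ⟨A, B, hA, hB, fun t ht => ?_⟩
    refine weaklyMild_of_scaling (hUt t ht) (hpos t) (G := G) (K := K)
      (c := fun x => b (t, x)) (fun x hx => hbK _ hx) hG
      (fun e he n => h (e, 1) ⟨he, rfl⟩ n) ?_
    intro x₀ hx₀ x hx
    rw [pderivW_zero, hfform _ hx, hbscale t x₀ x hx₀ hx]
  have h1 : ∀ l : Fin m, ∃ A B : ℝ, 0 < A ∧ 0 < B ∧ ∀ t ∈ T,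
      WeaklyMild {x : Fin m → ℝ | (t, x) ∈ U}
        (pderivW {x : Fin m → ℝ | (t, x) ∈ U} (fun x => f (t, x)) (Pi.single l 1)) A B 0 := by
    intro l
    set G : ((Fin N → ℝ) × (Fin N → ℝ)) × (Fin m → ℝ) → ℝ := fun q =>
      fderiv ℝ Φ (fun i => q.1.1 i * realMonomial (μ i) q.2)
        (fun i => q.1.2 i * realMonomial (μ i) q.2 * (q.2 l)⁻¹)
    have hG : ∀ e ∈ K ×ˢ Metric.closedBall (0 : Fin N → ℝ) B', AnalyticAt ℝ G (e, 1) := by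
      rintro e ⟨he, -⟩
      refine analyticAt_clm_apply ?_ ?_
      · refine AnalyticAt.comp (g := fderiv ℝ Φ)
          (f := fun q : ((Fin N → ℝ) × (Fin N → ℝ)) × (Fin m → ℝ) =>
            fun i => q.1.1 i * realMonomial (μ i) q.2) ?_ ?_
        · have : (fun i => e.1 i * realMonomial (μ i) 1) = e.1 := by simp [realMonomial]
          simpa only [this] using (hΦ e.1 (hWb he)).fderiv
        · refine AnalyticAt.pi fun i => AnalyticAt.mul ?_ (analyticAt_realMonomial _ _)
          exact ((ContinuousLinearMap.proj (R := ℝ) (φ := fun _ : Fin N => ℝ) i).comp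
            ((ContinuousLinearMap.fst ℝ _ (Fin N → ℝ)).comp
              (ContinuousLinearMap.fst ℝ _ (Fin m → ℝ)))).analyticAt _
      · refine AnalyticAt.pi fun i => (AnalyticAt.mul ?_ (analyticAt_realMonomial _ _)).mul
          (AnalyticAt.inv ?_ (by simp))
        · exact ((ContinuousLinearMap.proj (R := ℝ) (φ := fun _ : Fin N => ℝ) i).comp
            ((ContinuousLinearMap.snd ℝ (Fin N → ℝ) _).comp
              (ContinuousLinearMap.fst ℝ _ (Fin m → ℝ)))).analyticAt _
        · exact ((ContinuousLinearMap.proj (R := ℝ) (φ := fun _ : Fin m => ℝ) l).comp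
            (ContinuousLinearMap.snd ℝ ((Fin N → ℝ) × (Fin N → ℝ)) _)).analyticAt _
    obtain ⟨A, B, hA, hB, h⟩ := compact_cauchy (G := G)
      ((hKcpt.prod (isCompact_closedBall (0 : Fin N → ℝ) B')).prod
        (isCompact_singleton (x := (1 : Fin m → ℝ)))) (by
        rintro ⟨e, z⟩ ⟨he, rfl⟩; exact hG e he)
    refine ⟨A, B, hA, hB, fun t ht => ?_⟩
    refine weaklyMild_of_scaling (hUt t ht) (hpos t) (G := G)
      (K := K ×ˢ Metric.closedBall (0 : Fin N → ℝ) B') (c := fun x => (b (t, x), D l t x))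
      (fun x hx => ⟨hbK _ hx, hDbd t ht x hx l⟩) hG
      (fun e he n => h (e, 1) ⟨he, rfl⟩ n) ?_
    intro x₀ hx₀ x hx
    have hDscale : D l t x =
        fun i => D l t x₀ i * realMonomial (μ i) (fun l => x l / x₀ l) * (x l / x₀ l)⁻¹ := by
      funext i
      have h3 := (hpos t x₀ hx₀ l).ne'
      have h4 := (hpos t x hx l).ne'
      simp only [hD, hbscale t x₀ x hx₀ hx]
      field_simp
    rw [pderivW_single (hUt t ht) _ hx, hfderiv t ht x hx, hbscale t x₀ x hx₀ hx, hDscale]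
  obtain ⟨A₀, B₀, hA₀, hB₀, h0⟩ := h0
  choose A₁ B₁ hA₁ hB₁ h1 using h1
  have hsA : 0 ≤ ∑ l, A₁ l := Finset.sum_nonneg fun l _ => (hA₁ l).le
  have hsB : 0 ≤ ∑ l, B₁ l := Finset.sum_nonneg fun l _ => (hB₁ l).le
  refine ⟨A₀ + ∑ l, A₁ l, B₀ + ∑ l, B₁ l, by positivity, by positivity, fun t ht β hβ => ?_⟩
  rcases multiindex_le_one β hβ with rfl | ⟨l, rfl⟩
  · exact (h0 t ht).mono (hpos t) hA₀.le hB₀.le (by linarith) (by linarith)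
  · have hAl := Finset.single_le_sum (fun l _ => (hA₁ l).le) (Finset.mem_univ l)
    have hBl := Finset.single_le_sum (fun l _ => (hB₁ l).le) (Finset.mem_univ l)
    exact (h1 l t ht).mono (hpos t) (hA₁ l).le (hB₁ l).le (by linarith) (by linarith)
end
end

section
/- Derivatives at the origin of the composed extremal Gevrey functions: Let d, e ≥ 1 be integers and M_f, M_g, R_f, R_g > 0 real numbers. Define F(y) = M_f·R_f / ((R_f + d·M_g) − (y_1+⋯+y_d)) for y ∈ ℝ^d with y_1+⋯+y_d < R_f + d·M_g, and G = (G_1,…,G_d) with G_i(x) = M_g·R_g / (R_g − (x_1+⋯+x_e)) for x ∈ ℝ^e with x_1+⋯+x_e < R_g in a neighborhood of 0 on which F ∘ G is defined. Then for every multi-index λ ∈ ℕ^e with |λ| ≥ 1, (F ∘ G)^{(λ)}(0) = M·|λ|! / R^{|λ|}, where M = d·M_f·M_g / (R_f + d·M_g) and R = R_f·R_g / (R_f + d·M_g). -/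
/-!
With `s = x_1 + ⋯ + x_e`, `K = R_f + d M_g` and `R = R_f R_g / K`, the composition is a function of
`s` alone, and partial fractions give
`F(G(x)) = M_f R_f / K + (M_f R_f / K) (R_g - R) / (R - s)`.
Moreover the domain of `F ∘ G` is exactly the half-space `s < R`
(`extremal_domain_eq`, `extremal_comp_eq`). Every coordinate direction is sent to `1` by the linear
form `s`, so a partial derivative of order `n` of such a function is the `n`-th derivative in one
variable (`pderivW_comp_sum`), and for `n ≥ 1` the `n`-th derivative of `A + B / (R - s)` at `0` is
`B n! / R ^ (n + 1)` (`iteratedDerivWithin_add_mul_inv`).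
-/

open Set

noncomputable section

/-- The linear form `x ↦ x_1 + ⋯ + x_e`. -/
def sumCLM (e : ℕ) : (Fin e → ℝ) →L[ℝ] ℝ := ∑ i, ContinuousLinearMap.proj i

lemma sumCLM_apply {e : ℕ} (x : Fin e → ℝ) : sumCLM e x = ∑ i, x i := by
  simp [sumCLM]

lemma length_mDirs {e : ℕ} (ν : Fin e → ℕ) : (mDirs ν).length = ∑ i, ν i := by
  simp [mDirs, List.length_flatMap, List.sum_ofFn, ← List.ofFn_eq_map]

lemma sumCLM_mDirs {e : ℕ} (ν : Fin e → ℕ) (j : Fin (∑ i, ν i)) :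
    sumCLM e ((mDirs ν).getD (j : ℕ) 0) = 1 := by
  have hj : (j : ℕ) < (mDirs ν).length := by rw [length_mDirs]; exact j.2
  rw [List.getD_eq_getElem _ _ hj]
  have hmem := List.getElem_mem hj
  generalize (mDirs ν)[(j : ℕ)] = v at hmem
  simp only [mDirs, List.mem_flatMap, List.mem_replicate] at hmem
  obtain ⟨i, -, -, rfl⟩ := hmem
  simp [sumCLM_apply]

/-- Partial derivatives of a function of `x_1 + ⋯ + x_e` depend only on the order of the
multi-index. -/
lemma pderivW_comp_sum {e : ℕ} {h : ℝ → ℝ} {S : Set ℝ} (hS : IsOpen S) (ν : Fin e → ℕ)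
    (hh : ContDiffOn ℝ (∑ i, ν i : ℕ) h S) {x : Fin e → ℝ} (hx : sumCLM e x ∈ S) :
    pderivW (sumCLM e ⁻¹' S) (h ∘ sumCLM e) ν x =
      iteratedDerivWithin (∑ i, ν i) h S (sumCLM e x) := by
  rw [pderivW, (sumCLM e).iteratedFDerivWithin_comp_right hh hS.uniqueDiffOn
    (hS.preimage (sumCLM e).continuous).uniqueDiffOn hx le_rfl,
    ContinuousMultilinearMap.compContinuousLinearMap_apply,
    iteratedDerivWithin_eq_iteratedFDerivWithin]
  congr 1
  funext j
  exact sumCLM_mDirs ν j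

lemma contDiffOn_add_mul_inv (A B R : ℝ) (n : ℕ) :
    ContDiffOn ℝ n (fun s => A + B * (-1 * s + R)⁻¹) (Iio R) := by
  refine contDiffOn_const.add (contDiffOn_const.mul (ContDiffOn.inv (by fun_prop) ?_))
  intro s hs
  have : s < R := hs
  linarith

lemma iteratedDerivWithin_add_mul_inv (A B : ℝ) {R : ℝ} (hR : 0 < R) {n : ℕ} (hn : 0 < n) :
    iteratedDerivWithin n (fun s => A + B * (-1 * s + R)⁻¹) (Iio R) 0 =
      B * (n.factorial / R ^ (n + 1)) := by
  have hc : ContDiffAt ℝ n (fun s : ℝ => (-1 * s + R)⁻¹) 0 :=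
    ContDiffAt.inv (by fun_prop) (by simpa using hR.ne')
  have hz : R ^ (-1 - n : ℤ) = (R ^ (n + 1))⁻¹ := by
    rw [← zpow_natCast, ← zpow_neg]
    congr 1
    push_cast
    ring
  rw [iteratedDerivWithin_of_isOpen isOpen_Iio (mem_Iio.2 hR), iteratedDeriv_const_add hn,
    iteratedDeriv_const_mul _ hc, iteratedDeriv_eq_iterate, iter_deriv_inv_linear]
  have h1 : (-1 : ℝ) ^ n * (-1) ^ n = 1 := by rw [← mul_pow]; simp
  simp only [mul_zero, zero_add, hz]
  linear_combination B * n.factorial * (R ^ (n + 1))⁻¹ * h1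

/-- The domain of `F ∘ G` is the half-space `s < R` in terms of `s = x_1 + ⋯ + x_e`. -/
lemma extremal_domain_eq {d : ℕ} {Mg Rf Rg : ℝ} (hMg : 0 < Mg) (hRf : 0 < Rf)
    (hRg : 0 < Rg) (s : ℝ) :
    (s < Rg ∧ (∑ _i : Fin d, Mg * Rg / (Rg - s)) < Rf + d * Mg) ↔
      s < Rf * Rg / (Rf + d * Mg) := by
  have hK : 0 < Rf + d * Mg := by positivity
  have hdM : 0 ≤ d * Mg := by positivity
  simp only [Finset.sum_const, Finset.card_univ, Fintype.card_fin, nsmul_eq_mul]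
  rw [lt_div_iff₀ hK]
  constructor
  · rintro ⟨h1, h2⟩
    rw [← mul_div_assoc, div_lt_iff₀ (sub_pos.2 h1)] at h2
    linarith
  · intro h
    have h1 : s < Rg := by
      by_contra! hs
      nlinarith [mul_le_mul_of_nonneg_right hs hK.le, mul_nonneg hdM hRg.le]
    refine ⟨h1, ?_⟩
    rw [← mul_div_assoc, div_lt_iff₀ (sub_pos.2 h1)]
    linarith

/-- Partial fraction decomposition of `F ∘ G` in the variable `s = x_1 + ⋯ + x_e`. -/
lemma extremal_comp_eq {d : ℕ} {Mf Mg Rf Rg : ℝ} (hMg : 0 < Mg) (hRf : 0 < Rf)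
    (hRg : 0 < Rg) {s : ℝ} (hs : s < Rf * Rg / (Rf + d * Mg)) :
    Mf * Rf / ((Rf + d * Mg) - ∑ _i : Fin d, Mg * Rg / (Rg - s)) =
      Mf * Rf / (Rf + d * Mg) +
        (Mf * Rf / (Rf + d * Mg)) * (Rg - Rf * Rg / (Rf + d * Mg)) *
          (-1 * s + Rf * Rg / (Rf + d * Mg))⁻¹ := by
  have hK : 0 < Rf + d * Mg := by positivity
  obtain ⟨h1, h2⟩ := (extremal_domain_eq hMg hRf hRg s).2 hs
  simp only [Finset.sum_const, Finset.card_univ, Fintype.card_fin, nsmul_eq_mul] at h2 ⊢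
  generalize hKd : Rf + d * Mg = K at *
  have hdM : d * Mg = K - Rf := by linarith
  have e1 : (d : ℝ) * (Mg * Rg / (Rg - s)) = (K - Rf) * Rg / (Rg - s) := by
    rw [← hdM]; ring
  have h3 : 0 < Rg - s := sub_pos.2 h1
  have h4 : 0 < Rf * Rg - s * K := by
    rw [lt_div_iff₀ hK] at hs; linarith
  have e2 : K - (K - Rf) * Rg / (Rg - s) = (Rf * Rg - s * K) / (Rg - s) := by
    field_simp
    ring
  have e3 : -1 * s + Rf * Rg / K = (Rf * Rg - s * K) / K := by
    field_simp
    ring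
  rw [e1, e2, e3]
  field_simp
  ring

/-- derivatives at the origin of the composition `F ∘ G` of the extremal
Gevrey functions, where `F(y) = M_f R_f/((R_f + d M_g) − (y_1+⋯+y_d))` and each
`G_i(x) = M_g R_g/(R_g − (x_1+⋯+x_e))`:
`(F∘G)^{(λ)}(0) = M·|λ|!/R^{|λ|}` with `M = d M_f M_g/(R_f + d M_g)` and
`R = R_f R_g/(R_f + d M_g)`. -/
theorem extremal_gevrey_comp_derivs {d e : ℕ} (hd : 0 < d) (he : 0 < e)
    (Mf Mg Rf Rg : ℝ) (hMf : 0 < Mf) (hMg : 0 < Mg) (hRf : 0 < Rf) (hRg : 0 < Rg) :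
    ∀ lam : Fin e → ℕ, 1 ≤ (∑ i, lam i) →
      pderivW {x : Fin e → ℝ | (∑ i, x i) < Rg ∧
            (∑ _i : Fin d, Mg * Rg / (Rg - ∑ i, x i)) < Rf + d * Mg}
          (fun x => Mf * Rf /
            ((Rf + d * Mg) - ∑ _i : Fin d, Mg * Rg / (Rg - ∑ i, x i))) lam 0 =
        (d * Mf * Mg / (Rf + d * Mg)) * (Nat.factorial (∑ i, lam i) : ℝ) /
          (Rf * Rg / (Rf + d * Mg)) ^ (∑ i, lam i) := by
  intro lam hlam
  have hK : 0 < Rf + d * Mg := by positivity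
  have hR : 0 < Rf * Rg / (Rf + d * Mg) := by positivity
  have h0 : sumCLM e 0 ∈ Iio (Rf * Rg / (Rf + d * Mg)) := by simpa using hR
  have hU : {x : Fin e → ℝ | (∑ i, x i) < Rg ∧
      (∑ _i : Fin d, Mg * Rg / (Rg - ∑ i, x i)) < Rf + d * Mg} =
      sumCLM e ⁻¹' Iio (Rf * Rg / (Rf + d * Mg)) := by
    ext x
    rw [mem_ofPred_eq, extremal_domain_eq hMg hRf hRg, mem_preimage, mem_Iio, sumCLM_apply]
  have key := pderivW_comp_sum isOpen_Iio lam
    (contDiffOn_add_mul_inv (Mf * Rf / (Rf + d * Mg))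
      ((Mf * Rf / (Rf + d * Mg)) * (Rg - Rf * Rg / (Rf + d * Mg)))
      (Rf * Rg / (Rf + d * Mg)) _) h0
  rw [map_zero, iteratedDerivWithin_add_mul_inv _ _ hR hlam] at key
  rw [hU, pderivW, iteratedFDerivWithin_congr (f := _ ∘ sumCLM e) ?_ h0]
  · rw [← pderivW, key, pow_succ]
    generalize hKd : Rf + d * Mg = K at *
    have hdM : d * Mg = K - Rf := by linarith
    have hP : (Rf * Rg / K) ^ (∑ i, lam i) ≠ 0 := (pow_pos hR _).ne'
    rw [show d * Mf * Mg = (K - Rf) * Mf by rw [← hdM]; ring]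
    generalize (Rf * Rg / K) ^ (∑ i, lam i) = P at *
    field_simp
  · intro x hx
    simp only [mem_preimage, mem_Iio, sumCLM_apply] at hx
    simp only [Function.comp_apply, sumCLM_apply]
    exact extremal_comp_eq hMg hRf hRg hx
end
end
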